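/- In the Gaussian–double-exponential model, where f₁(t) = (2πσ₁²)^{−1/2} e^{−t²/(2σ₁²)} and f₂(t) = (1/(2σ₂)) e^{−|t|/σ₂} with σ₁, σ₂ > 0 and y ∈ ℝ fixed, the conditional posterior of X given Θ = θ converges, as θ → +∞, to the N(y + σ₁²/σ₂, σ₁²) law pointwise at the level of densities: for every x ∈ ℝ, f_θ(x)/c_θ → (2πσ₁²)^{−1/2} exp(−(x − y − σ₁²/σ₂)²/(2σ₁²)) as θ → +∞, where f_θ(x) = f₁(y − x)·f₂(x − θ) and c_θ = ∫_ℝ f_θ(x) dx. (By symmetry, as θ → −∞ the limit is the N(y − σ₁²/σ₂, σ₁²) density.) -/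

import Mathlib

open MeasureTheory Filter

noncomputable section

/-- Gaussian density with mean `0` and standard deviation `σ`. -/
def gaussD (σ t : ℝ) : ℝ := (Real.sqrt (2 * Real.pi * σ ^ 2))⁻¹ * Real.exp (-t ^ 2 / (2 * σ ^ 2))

/-- Double exponential (Laplace) density with scale `σ`. -/
def laplD (σ t : ℝ) : ℝ := (1 / (2 * σ)) * Real.exp (-|t| / σ)

/-- Joint (unnormalised posterior) density `f_θ(x) = f₁(y - x) · f₂(x - θ)`. -/
def fjoint (f₁ f₂ : ℝ → ℝ) (y θ x : ℝ) : ℝ := f₁ (y - x) * f₂ (x - θ)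

/-- Normalising constant `c_θ = ∫ f_θ(x) dx`. -/
def cnorm (f₁ f₂ : ℝ → ℝ) (y θ : ℝ) : ℝ := ∫ x, fjoint f₁ f₂ y θ x

theorem fjoint_factor (σ₁ σ₂ y : ℝ) (h₁ : 0 < σ₁) (h₂ : 0 < σ₂) (θ x : ℝ) :
    fjoint (gaussD σ₁) (laplD σ₂) y θ x =
      ((1 / (2 * σ₂)) * Real.exp (y / σ₂ + σ₁ ^ 2 / (2 * σ₂ ^ 2) - θ / σ₂)) *
      (((Real.sqrt (2 * Real.pi * σ₁ ^ 2))⁻¹ *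
          Real.exp (-(x - y - σ₁ ^ 2 / σ₂) ^ 2 / (2 * σ₁ ^ 2))) *
        Real.exp (-(|x - θ| + (x - θ)) / σ₂)) := by
  unfold fjoint gaussD laplD
  have e : Real.exp (-(y - x) ^ 2 / (2 * σ₁ ^ 2)) * Real.exp (-|x - θ| / σ₂) =
      Real.exp (y / σ₂ + σ₁ ^ 2 / (2 * σ₂ ^ 2) - θ / σ₂) *
      Real.exp (-(x - y - σ₁ ^ 2 / σ₂) ^ 2 / (2 * σ₁ ^ 2)) *
        Real.exp (-(|x - θ| + (x - θ)) / σ₂) := by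
    rw [← Real.exp_add, ← Real.exp_add, ← Real.exp_add]
    congr 1
    field_simp
    ring
  linear_combination ((Real.sqrt (2 * Real.pi * σ₁ ^ 2))⁻¹ * (1 / (2 * σ₂))) * e

/-- in the Gaussian–double-exponential model, as `θ → +∞` the conditional
posterior density of `X` given `Θ = θ` converges pointwise to the
`N(y + σ₁²/σ₂, σ₁²)` density. -/
theorem gaussian_laplace_posterior_limit (σ₁ σ₂ y : ℝ) (h₁ : 0 < σ₁) (h₂ : 0 < σ₂) :
    ∀ x : ℝ,
      Tendsto (fun θ =>
          fjoint (gaussD σ₁) (laplD σ₂) y θ x / cnorm (gaussD σ₁) (laplD σ₂) y θ)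
        atTop
        (nhds ((Real.sqrt (2 * Real.pi * σ₁ ^ 2))⁻¹ *
          Real.exp (-(x - y - σ₁ ^ 2 / σ₂) ^ 2 / (2 * σ₁ ^ 2)))) := by
  intro x
  set G : ℝ → ℝ := fun x => (Real.sqrt (2 * Real.pi * σ₁ ^ 2))⁻¹ *
          Real.exp (-(x - y - σ₁ ^ 2 / σ₂) ^ 2 / (2 * σ₁ ^ 2)) with hG
  have hGe : G = ProbabilityTheory.gaussianPDFReal (y + σ₁ ^ 2 / σ₂) (Real.toNNReal (σ₁ ^ 2)) := by
    funext t
    simp only [hG, ProbabilityTheory.gaussianPDFReal, Real.coe_toNNReal _ (sq_nonneg σ₁), sub_sub]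
  have hGi : Integrable G := by
    rw [hGe]; exact ProbabilityTheory.integrable_gaussianPDFReal _ _
  have hG1 : ∫ t, G t = 1 := by
    rw [hGe]
    apply ProbabilityTheory.integral_gaussianPDFReal_eq_one
    exact (Real.toNNReal_pos.mpr (by positivity)).ne'
  have hlim : ∀ t, Tendsto (fun θ => G t * Real.exp (-(|t - θ| + (t - θ)) / σ₂)) atTop
      (nhds (G t)) := by
    intro t
    apply tendsto_const_nhds.congr'
    filter_upwards [eventually_ge_atTop t] with θ hθ
    rw [abs_of_nonpos (by linarith)]
    simp
  have hint : Tendsto (fun θ => ∫ t, G t * Real.exp (-(|t - θ| + (t - θ)) / σ₂)) atTop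
      (nhds (∫ t, G t)) := by
    apply tendsto_integral_filter_of_dominated_convergence G _ _ hGi (ae_of_all _ hlim)
    · refine Eventually.of_forall fun θ => Continuous.aestronglyMeasurable ?_
      simp only [hG]
      fun_prop
    · refine Eventually.of_forall fun θ => ae_of_all _ fun t => ?_
      have hp : 0 ≤ G t := by simp only [hG]; positivity
      rw [Real.norm_of_nonneg (by positivity)]
      refine mul_le_of_le_one_right hp (Real.exp_le_one_iff.mpr ?_)
      apply div_nonpos_of_nonpos_of_nonneg _ h₂.le
      linarith [neg_abs_le (t - θ)]
  rw [hG1] at hint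
  have := (hlim x).div hint one_ne_zero
  rw [div_one] at this
  refine this.congr fun θ => ?_
  unfold cnorm
  simp only [fjoint_factor σ₁ σ₂ y h₁ h₂]
  rw [integral_const_mul, mul_div_mul_left _ _ (by positivity)]
  rfl
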